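/- The function Q satisfies the first-integral identity Q'(x)^2 = Q(x)^2 − Q(x)^6 / 3 for every x ∈ ℝ. -/

import Mathlib

/-!
Logarithmic differentiation gives `Q' = -tanh(2x) Q`. Since `Q ^ 4 = 3 / cosh(2x) ^ 2`, the identity
`tanh ^ 2 = 1 - 1 / cosh ^ 2` reads `tanh(2x) ^ 2 = 1 - Q ^ 4 / 3`, and multiplying by `Q ^ 2`
yields the first integral.
-/

open Real

/-- The soliton profile `Q(x) = (3 / cosh(2x)^2)^(1/4)`. -/
noncomputable def Q (x : ℝ) : ℝ := (3 / Real.cosh (2 * x) ^ 2) ^ ((1 : ℝ) / 4)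

lemma Q_pow_four (x : ℝ) : Q x ^ 4 = 3 / Real.cosh (2 * x) ^ 2 := by
  have h : 0 ≤ 3 / Real.cosh (2 * x) ^ 2 := by positivity
  rw [Q, ← Real.rpow_natCast, ← Real.rpow_mul h]
  norm_num

lemma hasDerivAt_Q (x : ℝ) :
    HasDerivAt Q (-(Real.sinh (2 * x) / Real.cosh (2 * x)) * Q x) x := by
  have hc : 0 < Real.cosh (2 * x) := Real.cosh_pos _
  have hb : 3 / Real.cosh (2 * x) ^ 2 ≠ 0 := by positivity
  have hcosh : HasDerivAt (fun y : ℝ => Real.cosh (2 * y)) (Real.sinh (2 * x) * (2 * 1)) x :=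
    ((hasDerivAt_id x).const_mul 2).cosh
  have hQ := (((hasDerivAt_const x (3 : ℝ)).fun_div (hcosh.fun_pow 2)
    (by positivity)).rpow_const (p := (1 : ℝ) / 4) (Or.inl hb))
  refine hQ.congr_deriv ?_
  rw [Real.rpow_sub_one hb, Q]
  field_simp
  norm_num
  ring

/-- The first-integral identity `Q'(x)^2 = Q(x)^2 - Q(x)^6 / 3` for all `x ∈ ℝ`. -/
theorem Q_first_integral (x : ℝ) : (deriv Q x) ^ 2 = Q x ^ 2 - Q x ^ 6 / 3 := by
  have hc : Real.cosh (2 * x) ≠ 0 := (Real.cosh_pos _).ne'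
  have h6 : Q x ^ 6 = Q x ^ 2 * (3 / Real.cosh (2 * x) ^ 2) := by
    rw [← Q_pow_four]; ring
  rw [(hasDerivAt_Q x).deriv, h6, mul_pow, neg_sq, div_pow, Real.sinh_sq]
  field_simp
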